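/- arXiv:math/0612668 — 2 statements merged into one kernel-verified Lean document; each statement's English description precedes it below -/
import Mathlib

section
/- Let G be a finite group, g ≥ 0 an integer, and z ∈ G. Then the number of 2g-tuples (x_1,y_1,…,x_g,y_g) ∈ G^{2g} satisfying [x_1,y_1][x_2,y_2]⋯[x_g,y_g]·z = 1 equals Σ_χ (|G|/χ(1))^{2g−1} · χ(z), where the sum is over the irreducible complex characters χ of G. -/
open CategoryTheory

/-!
Let `V` be irreducible with representation `ρ` and character `χ`. By Schur's lemma the sum of the
`ρ (y x⁻¹ y⁻¹)` over `y` is the scalar `|G| χ(x⁻¹) / χ(1)`, and the sum of the `χ(x⁻¹) ρ(x)` is the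
scalar `|G| / χ(1)`; hence the sum of `ρ` over all commutators, counted with multiplicity, is the
scalar `(|G| / χ(1))²`, and over products of `g` commutators it is `(|G| / χ(1)) ^ (2 g)`. Tracing
against `ρ(z)` and using that `∑ χ(1) χ(w)` equals `|G|` at `w = 1` and vanishes elsewhere counts
the solutions.

That last relation says that the central idempotents `(χ(1) / |G|) ∑ χ(x⁻¹) x` of `k[G]` add up to
`1`. Their sum acts as the identity on every simple module, so it differs from `1` by an element of
the Jacobson radical, which is zero by Maschke's theorem.
-/

open scoped MonoidAlgebra

universe u v

section Schur

variable {k : Type u} {G : Type v} [Field k] [Monoid G] (V : FDRep k G) [Simple V]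
  {f : Module.End k V}

theorem end_one_ne_zero_of_simple : (1 : Module.End k V) ≠ 0 := fun h =>
  id_nonzero V (by ext1; ext x; exact LinearMap.congr_fun h x)

theorem exists_smul_one_eq_of_commute [IsAlgClosed k] (hf : ∀ g, Commute f (V.ρ g)) :
    ∃ c : k, c • (1 : Module.End k V) = f := by
  let F : V ⟶ V := ⟨InducedCategory.homMk (ModuleCat.ofHom f), fun g => by
    ext1
    ext x
    exact LinearMap.congr_fun (hf g) x⟩
  obtain ⟨c, hc⟩ := endomorphism_simple_eq_smul_id k F
  exact ⟨c, congrArg (fun F : V ⟶ V => F.hom.hom.hom) hc⟩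

theorem character_one_smul_eq_trace_smul_one [IsAlgClosed k] (hf : ∀ g, Commute f (V.ρ g)) :
    V.character 1 • f = LinearMap.trace k V f • 1 := by
  obtain ⟨c, rfl⟩ := exists_smul_one_eq_of_commute V hf
  rw [FDRep.char_one, map_smul, LinearMap.trace_one, smul_smul, smul_eq_mul, mul_comm]

end Schur

section Commute

variable {k G M : Type*} [CommSemiring k] [Group G] [Fintype G] [AddCommMonoid M] [Module k M]
  (ρ : Representation k G M)

theorem commute_sum_rho_conj (x g : G) : Commute (∑ y, ρ (y * x * y⁻¹)) (ρ g) := by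
  rw [Commute, SemiconjBy, Finset.sum_mul, Finset.mul_sum]
  refine Fintype.sum_equiv (Equiv.mulLeft g⁻¹) _ _ fun y => ?_
  rw [← map_mul, ← map_mul, Equiv.coe_mulLeft]
  congr 1
  group

theorem commute_sum_smul_rho_of_conj_invariant {φ : G → k} (hφ : ∀ x y, φ (y * x * y⁻¹) = φ x)
    (g : G) : Commute (∑ x, φ x • ρ x) (ρ g) := by
  rw [Commute, SemiconjBy, Finset.sum_mul, Finset.mul_sum]
  refine Fintype.sum_equiv (MulAut.conj g⁻¹).toEquiv _ _ fun x => ?_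
  rw [MulEquiv.toEquiv_eq_coe, MulEquiv.coe_toEquiv, MulAut.conj_apply, hφ, smul_mul_assoc,
    mul_smul_comm, ← map_mul, ← map_mul]
  congr 2
  group

end Commute

section ClassSums

variable {k G : Type u} [Field k] [IsAlgClosed k] [Group G] (V W : FDRep k G) [Simple V] [Simple W]

theorem character_one_smul_sum_rho_conj [Fintype G] (x : G) :
    V.character 1 • ∑ y, V.ρ (y * x * y⁻¹) = ((Nat.card G : k) * V.character x) • 1 := by
  rw [character_one_smul_eq_trace_smul_one V (commute_sum_rho_conj V.ρ x), map_sum]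
  have htrace (y : G) : LinearMap.trace k V (V.ρ (y * x * y⁻¹)) = V.character x :=
    V.char_conj x y
  simp only [htrace, Finset.sum_const, Finset.card_univ, nsmul_eq_mul, Nat.card_eq_fintype_card]

variable [NeZero (Nat.card G : k)]

open Classical in
theorem character_one_smul_sum_character_inv_smul_rho [Fintype G] :
    W.character 1 • ∑ x, V.character x⁻¹ • W.ρ x =
      (if Nonempty (W ≅ V) then (Nat.card G : k) else 0) • 1 := by
  have : Invertible (Nat.card G : k) := invertibleOfNonzero (NeZero.ne _)
  have hconj (x y : G) : V.character (y * x * y⁻¹)⁻¹ = V.character x⁻¹ := by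
    rw [← V.char_conj x⁻¹ y, mul_inv_rev, mul_inv_rev, inv_inv, mul_assoc]
  have htrace : LinearMap.trace k W (∑ x, V.character x⁻¹ • W.ρ x) =
      ∑ x, W.character x * V.character x⁻¹ := by
    simp only [map_sum, map_smul, smul_eq_mul, mul_comm (W.character _)]
    rfl
  have horth := FDRep.char_orthonormal W V
  rw [inv_mul_eq_iff_eq_mul₀ (NeZero.ne _), mul_ite, mul_one, mul_zero] at horth
  rw [character_one_smul_eq_trace_smul_one W (commute_sum_smul_rho_of_conj_invariant W.ρ hconj),
    htrace, horth]

theorem character_one_ne_zero [Finite G] : V.character 1 ≠ 0 := by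
  have := Fintype.ofFinite G
  intro h
  have hsum := character_one_smul_sum_character_inv_smul_rho V V
  rw [h, zero_smul, if_pos ⟨Iso.refl V⟩] at hsum
  exact smul_ne_zero (NeZero.ne _) (end_one_ne_zero_of_simple V) hsum.symm

theorem sum_rho_commutator [Fintype G] :
    ∑ q : G × G, V.ρ (q.1 * q.2 * q.1⁻¹ * q.2⁻¹) = ((Nat.card G : k) / V.character 1) ^ 2 • 1 := by
  have hd := character_one_ne_zero V
  have hconj (x : G) : ∑ y, V.ρ (y * x⁻¹ * y⁻¹) =
      ((Nat.card G : k) / V.character 1 * V.character x⁻¹) • 1 := by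
    rw [div_mul_eq_mul_div, div_eq_inv_mul, mul_smul, ← character_one_smul_sum_rho_conj,
      inv_smul_smul₀ hd]
  have hclass : ∑ x, V.character x⁻¹ • V.ρ x = ((Nat.card G : k) / V.character 1) • 1 := by
    rw [eq_comm, div_eq_inv_mul, mul_smul, inv_smul_eq_iff₀ hd,
      character_one_smul_sum_character_inv_smul_rho V V, if_pos ⟨Iso.refl V⟩]
  calc ∑ q : G × G, V.ρ (q.1 * q.2 * q.1⁻¹ * q.2⁻¹)
      = ∑ x, V.ρ x * ∑ y, V.ρ (y * x⁻¹ * y⁻¹) := by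
        simp only [Fintype.sum_prod_type, Finset.mul_sum, ← map_mul, mul_assoc]
    _ = ((Nat.card G : k) / V.character 1) • ∑ x, V.character x⁻¹ • V.ρ x := by
        simp only [hconj, mul_smul_comm, mul_one, mul_smul, Finset.smul_sum]
    _ = ((Nat.card G : k) / V.character 1) ^ 2 • 1 := by
        rw [hclass, smul_smul, ← sq]

end ClassSums

section SimpleModules

variable {k G M : Type*} [Monoid G]

theorem asAlgebraHom_ofModule' [CommSemiring k] [AddCommMonoid M] [Module k M] [Module k[G] M]
    [IsScalarTower k k[G] M] (a : k[G]) (m : M) :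
    (Representation.ofModule' M : Representation k G M).asAlgebraHom a m = a • m := by
  rw [Representation.asAlgebraHom, Representation.ofModule', Equiv.apply_symm_apply]
  rfl

theorem isIrreducible_ofModule' [Field k] [AddCommGroup M] [Module k M] [Module k[G] M]
    [IsScalarTower k k[G] M] [IsSimpleModule k[G] M] :
    (Representation.ofModule' M : Representation k G M).IsIrreducible := by
  rw [Representation.irreducible_iff_isSimpleModule_asModule]
  let e : (Representation.ofModule' M : Representation k G M).asModule ≃ₗ[k[G]] M :=
    { Representation.asModuleEquiv _ with map_smul' := fun a m => asAlgebraHom_ofModule' a _ }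
  exact IsSimpleModule.congr e

end SimpleModules

section GroupAlgebra

variable {k G : Type u} [Field k] [IsAlgClosed k] [Group G] [Finite G] [NeZero (Nat.card G : k)]
  {M : Type u} [AddCommGroup M] [Module k M]

theorem simple_of_isIrreducible [FiniteDimensional k M] (ρ : Representation k G M)
    [ρ.IsIrreducible] : Simple (FDRep.of ρ) := by
  rw [FDRep.simple_iff_end_is_rank_one,
    ← Representation.IsIrreducible.finrank_intertwiningMap_self ρ]
  exact ((FDRep.forget₂HomLinearEquiv _ _).symm.trans (Rep.homLinearEquiv _ _)).finrank_eq

theorem smul_eq_zero_of_forall_simple [Module k[G] M] [IsScalarTower k k[G] M]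
    [IsSimpleModule k[G] M] {a : k[G]}
    (h : ∀ W : FDRep k G, Simple W → Representation.asAlgebraHom W.ρ a = 0) (m : M) :
    a • m = 0 := by
  have := isIrreducible_ofModule' (k := k) (G := G) (M := M)
  have : FiniteDimensional k M := Module.Finite.trans k[G] M
  rw [← asAlgebraHom_ofModule']
  exact LinearMap.congr_fun (h _ (simple_of_isIrreducible (Representation.ofModule' M))) m

theorem eq_zero_of_forall_simple_asAlgebraHom_eq_zero {a : k[G]}
    (h : ∀ W : FDRep k G, Simple W → Representation.asAlgebraHom W.ρ a = 0) : a = 0 := by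
  suffices a ∈ Ring.jacobson k[G] by rwa [IsSemisimpleRing.jacobson_eq_bot] at this
  rw [Ring.jacobson_eq_sInf_isMaximal, Submodule.mem_sInf]
  intro I hI
  have : IsSimpleModule k[G] (k[G] ⧸ I) :=
    isSimpleModule_iff_isCoatom.2 (Ideal.isMaximal_def.1 hI)
  have hone := smul_eq_zero_of_forall_simple h (Submodule.Quotient.mk (p := I) 1)
  rwa [← Submodule.Quotient.mk_smul, smul_eq_mul, mul_one, Submodule.Quotient.mk_eq_zero]
    at hone

end GroupAlgebra

section CentralIdempotent

/-- The primitive central idempotent `(χ(1) / |G|) ∑ χ(x⁻¹) x` of the group algebra attached to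
an irreducible representation with character `χ`. -/
noncomputable def centralIdempotent {k : Type u} {G : Type v} [Field k] [Group G] [Fintype G]
    (V : FDRep k G) : k[G] :=
  ∑ x, MonoidAlgebra.single x ((Nat.card G : k)⁻¹ * V.character 1 * V.character x⁻¹)

theorem coeff_centralIdempotent {k : Type u} {G : Type v} [Field k] [Group G] [Fintype G]
    (V : FDRep k G) (x : G) :
    (centralIdempotent V).coeff x = (Nat.card G : k)⁻¹ * V.character 1 * V.character x⁻¹ := by
  classical
  simp [centralIdempotent, MonoidAlgebra.coeff_sum, Finsupp.finsetSum_apply, Finsupp.single_apply]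

variable {k G : Type u} [Field k] [IsAlgClosed k] [Group G] [Fintype G] [NeZero (Nat.card G : k)]

open Classical in
theorem asAlgebraHom_centralIdempotent (V W : FDRep k G) [Simple V] [Simple W] :
    Representation.asAlgebraHom W.ρ (centralIdempotent V) =
      if Nonempty (W ≅ V) then 1 else 0 := by
  have hact : Representation.asAlgebraHom W.ρ (centralIdempotent V) =
      ((Nat.card G : k)⁻¹ * V.character 1) • ∑ x, V.character x⁻¹ • W.ρ x := by
    simp only [centralIdempotent, map_sum, Representation.asAlgebraHom_single, mul_smul,
      Finset.smul_sum]
  have hsum := character_one_smul_sum_character_inv_smul_rho V W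
  rw [hact]
  split_ifs at hsum ⊢ with hiso
  · obtain ⟨e⟩ := hiso
    rw [← congrFun (FDRep.char_iso e) 1, mul_smul, hsum, inv_smul_smul₀ (NeZero.ne _)]
  · rw [zero_smul, smul_eq_zero_iff_right (character_one_ne_zero W)] at hsum
    rw [hsum, smul_zero]

variable {ι : Type*} [Fintype ι] {V : ι → FDRep k G}

theorem sum_centralIdempotent (hsimple : ∀ i, Simple (V i))
    (hdistinct : ∀ i j, i ≠ j → ¬ Nonempty (V i ≅ V j))
    (hcomplete : ∀ W : FDRep k G, Simple W → ∃ i, Nonempty (W ≅ V i)) :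
    ∑ i, centralIdempotent (V i) = 1 := by
  rw [← sub_eq_zero]
  refine eq_zero_of_forall_simple_asAlgebraHom_eq_zero fun W hW => ?_
  obtain ⟨j, ⟨e⟩⟩ := hcomplete W hW
  rw [map_sub, map_one, sub_eq_zero, map_sum, Fintype.sum_eq_single j fun i hij => ?_]
  · rw [asAlgebraHom_centralIdempotent, if_pos ⟨e⟩]
  · rw [asAlgebraHom_centralIdempotent,
      if_neg fun ⟨e'⟩ => hdistinct i j hij ⟨e'.symm ≪≫ e⟩]

end CentralIdempotent

section Counting

variable {k G : Type u} [Field k] [IsAlgClosed k] [Group G] [Finite G] [NeZero (Nat.card G : k)]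
  {ι : Type*} [Fintype ι] {V : ι → FDRep k G}

theorem sum_character_one_mul_character [DecidableEq G] (hsimple : ∀ i, Simple (V i))
    (hdistinct : ∀ i j, i ≠ j → ¬ Nonempty (V i ≅ V j))
    (hcomplete : ∀ W : FDRep k G, Simple W → ∃ i, Nonempty (W ≅ V i)) (x : G) :
    ∑ i, (V i).character 1 * (V i).character x = if x = 1 then (Nat.card G : k) else 0 := by
  have := Fintype.ofFinite G
  have hcoeff := congrArg (fun a : k[G] => a.coeff x⁻¹)
    (sum_centralIdempotent hsimple hdistinct hcomplete)
  simp only [MonoidAlgebra.coeff_sum, Finsupp.finsetSum_apply, coeff_centralIdempotent, inv_inv,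
    mul_assoc, ← Finset.mul_sum, MonoidAlgebra.one_def, MonoidAlgebra.coeff_single,
    Finsupp.single_apply, eq_comm (a := (1 : G)), inv_eq_one] at hcoeff
  rw [inv_mul_eq_iff_eq_mul₀ (NeZero.ne _)] at hcoeff
  rw [hcoeff, mul_ite, mul_one, mul_zero]

theorem card_mul_eq_one_eq_sum {α : Type*} [Fintype α] (hsimple : ∀ i, Simple (V i))
    (hdistinct : ∀ i j, i ≠ j → ¬ Nonempty (V i ≅ V j))
    (hcomplete : ∀ W : FDRep k G, Simple W → ∃ i, Nonempty (W ≅ V i)) {f : α → G} {c : ι → k}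
    (hf : ∀ i, ∑ a, (V i).ρ (f a) = c i • 1) (z : G) :
    (Nat.card {a // f a * z = 1} : k) =
      (Nat.card G : k)⁻¹ * ∑ i, (V i).character 1 * (c i * (V i).character z) := by
  classical
  have hchar (i : ι) : ∑ a, (V i).character (f a * z) = c i * (V i).character z :=
    calc ∑ a, (V i).character (f a * z)
        = LinearMap.trace k (V i) ((∑ a, (V i).ρ (f a)) * (V i).ρ z) := by
          simp only [FDRep.character, map_mul, Finset.sum_mul, map_sum]
      _ = c i * (V i).character z := by
          rw [hf, smul_mul_assoc, one_mul, map_smul, smul_eq_mul, FDRep.character]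
  rw [eq_inv_mul_iff_mul_eq₀ (NeZero.ne _)]
  calc (Nat.card G : k) * Nat.card {a // f a * z = 1}
      = ∑ a, if f a * z = 1 then (Nat.card G : k) else 0 := by
        rw [← Finset.sum_filter, Finset.sum_const, nsmul_eq_mul, ← Fintype.card_subtype,
          ← Nat.card_eq_fintype_card, mul_comm]
    _ = ∑ a, ∑ i, (V i).character 1 * (V i).character (f a * z) := by
        simp only [sum_character_one_mul_character hsimple hdistinct hcomplete]
    _ = ∑ i, (V i).character 1 * (c i * (V i).character z) := by
        rw [Finset.sum_comm]
        simp only [← Finset.mul_sum, hchar]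

end Counting

theorem sum_prod_ofFn_eq_pow {R α : Type*} [Semiring R] [Fintype α] (φ : α → R) (n : ℕ) :
    ∑ p : Fin n → α, (List.ofFn fun i => φ (p i)).prod = (∑ a, φ a) ^ n := by
  classical
  simpa using ((MultilinearMap.mkPiAlgebraFin ℕ n R).map_sum fun _ a => φ a).symm

theorem sum_rho_prod_commutators {k G : Type u} [Field k] [IsAlgClosed k] [Group G] [Fintype G]
    [NeZero (Nat.card G : k)] (V : FDRep k G) [Simple V] (g : ℕ) :
    ∑ p : Fin g → G × G,
        V.ρ (List.ofFn fun i => (p i).1 * (p i).2 * (p i).1⁻¹ * (p i).2⁻¹).prod =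
      ((Nat.card G : k) / V.character 1) ^ (2 * g) • 1 := by
  have hpow := sum_prod_ofFn_eq_pow (fun q : G × G => V.ρ (q.1 * q.2 * q.1⁻¹ * q.2⁻¹)) g
  rw [sum_rho_commutator, smul_pow, one_pow, ← pow_mul] at hpow
  rw [← hpow]
  simp only [map_list_prod, List.map_ofFn, Function.comp_def]

theorem statement2_general {k G : Type u} [Field k] [IsAlgClosed k] [Group G] [Finite G]
    [NeZero (Nat.card G : k)] (g : ℕ) (z : G) {ι : Type*} [Fintype ι] (V : ι → FDRep k G)
    (hsimple : ∀ i, Simple (V i))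
    (hdistinct : ∀ i j, i ≠ j → ¬ Nonempty (V i ≅ V j))
    (hcomplete : ∀ W : FDRep k G, Simple W → ∃ i, Nonempty (W ≅ V i)) :
    (Nat.card {p : (Fin g → G) × (Fin g → G) //
        (List.ofFn fun i => p.1 i * p.2 i * (p.1 i)⁻¹ * (p.2 i)⁻¹).prod * z = 1} : k)
      = ∑ i, ((Nat.card G : k) / (V i).character 1) ^ (2 * (g : ℤ) - 1)
          * (V i).character z := by
  have := Fintype.ofFinite G
  have hpairs : Nat.card {p : (Fin g → G) × (Fin g → G) //
        (List.ofFn fun i => p.1 i * p.2 i * (p.1 i)⁻¹ * (p.2 i)⁻¹).prod * z = 1} =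
      Nat.card {p : Fin g → G × G //
        (List.ofFn fun i => (p i).1 * (p i).2 * (p i).1⁻¹ * (p i).2⁻¹).prod * z = 1} :=
    Nat.card_congr <|
      (Equiv.arrowProdEquivProdArrow (Fin g) (fun _ => G) fun _ => G).symm.subtypeEquiv
        fun _ => Iff.rfl
  rw [hpairs, card_mul_eq_one_eq_sum hsimple hdistinct hcomplete
    (fun i => sum_rho_prod_commutators (V i) g) z, Finset.mul_sum]
  refine Finset.sum_congr rfl fun i _ => ?_
  have hcard : (Nat.card G : k) ≠ 0 := NeZero.ne _
  rw [zpow_sub_one₀ (div_ne_zero hcard (character_one_ne_zero (V i))), inv_div]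
  norm_cast
  ring

/-- For a finite group `G`, `g ≥ 0` and `z ∈ G`, the number of `2g`-tuples
`(x₁,y₁,…,x_g,y_g) ∈ G^{2g}` with `[x₁,y₁]⋯[x_g,y_g]·z = 1` equals
`Σ_χ (|G|/χ(1))^{2g−1} · χ(z)`, the sum being over a complete family of pairwise
non-isomorphic irreducible complex representations of `G`. -/
theorem statement2 (G : Type) [Group G] [Fintype G] (g : ℕ) (z : G)
    (ι : Type) [Fintype ι] (V : ι → FDRep ℂ G)
    (hsimple : ∀ i, Simple (V i))
    (hdistinct : ∀ i j, i ≠ j → ¬ Nonempty (V i ≅ V j))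
    (hcomplete : ∀ W : FDRep ℂ G, Simple W → ∃ i, Nonempty (W ≅ V i)) :
    (Nat.card {p : (Fin g → G) × (Fin g → G) //
        (List.ofFn fun i => p.1 i * p.2 i * (p.1 i)⁻¹ * (p.2 i)⁻¹).prod * z = 1} : ℂ)
      = ∑ i, ((Fintype.card G : ℂ) / (V i).character 1) ^ (2 * (g : ℤ) - 1)
          * (V i).character z := by
  rw [← Nat.card_eq_fintype_card (α := G)]
  exact statement2_general g z V hsimple hdistinct hcomplete
end

section
/- Let K be a field, n ≥ 1 an integer, ζ ∈ K a primitive n-th root of unity, and A, B ∈ GL(n,K) matrices satisfying A B A⁻¹ B⁻¹ = ζ·I_n. Then every K-linear subspace W ⊆ K^n with A·W ⊆ W and B·W ⊆ W is either the zero subspace or all of K^n; i.e., the action on K^n of the subgroup generated by A and B is irreducible. -/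
open scoped MatrixGroups

/-!
If `f g = ζ g f` on `V`, the same relation holds for the restrictions of `f` and `g` to an invariant
subspace `W`. These restrictions are injective, hence invertible, so taking determinants gives
`ζ ^ dim W = 1`. When `ζ` is a primitive root of unity of order `dim V` this forces
`dim V ∣ dim W ≤ dim V`.
-/

open Module
open scoped commutatorElement

theorem mul_eq_smul_mul_of_commutatorElement_eq_smul_one {R E : Type*} [Monoid E] [SMul R E]
    [IsScalarTower R E E] {ζ : R} {a b : Eˣ} (h : (↑⁅a, b⁆ : E) = ζ • (1 : E)) :
    (a : E) * b = ζ • ((b : E) * a) :=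
  calc (a : E) * b = ↑⁅a, b⁆ * ((b : E) * a) := by simp [commutatorElement_def, mul_assoc]
    _ = ζ • ((b : E) * a) := by rw [h, smul_one_mul]

theorem coe_commutatorElement_toLin_eq_smul_one {ι R : Type*} [Fintype ι] [DecidableEq ι]
    [CommRing R] {ζ : R} {A B : GL ι R} (h : (↑⁅A, B⁆ : Matrix ι ι R) = ζ • (1 : Matrix ι ι R)) :
    (↑⁅Matrix.GeneralLinearGroup.toLin A, Matrix.GeneralLinearGroup.toLin B⁆ : End R (ι → R)) =
      ζ • (1 : End R (ι → R)) := by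
  rw [← map_commutatorElement]
  calc Matrix.toLinAlgEquiv' (↑⁅A, B⁆ : Matrix ι ι R) = Matrix.toLinAlgEquiv' (ζ • 1) := by rw [h]
    _ = ζ • (1 : End R (ι → R)) := by rw [map_smul, map_one]

theorem pow_finrank_eq_one_of_mul_eq_smul_mul {R M : Type*} [CommRing R] [AddCommGroup M]
    [Module R M] [Free R M] {ζ : R} {f g : End R M} (hf : IsUnit f) (hg : IsUnit g)
    (h : f * g = ζ • (g * f)) : ζ ^ finrank R M = 1 := by
  have hunit : IsUnit (LinearMap.det (g * f)) := (hg.mul hf).map LinearMap.det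
  have hdet : ζ ^ finrank R M * LinearMap.det (g * f) = 1 * LinearMap.det (g * f) :=
    calc ζ ^ finrank R M * LinearMap.det (g * f) = LinearMap.det (f * g) := by
          rw [h, LinearMap.det_smul]
      _ = 1 * LinearMap.det (g * f) := by rw [map_mul, map_mul, mul_comm, one_mul]
  exact hunit.mul_right_cancel hdet

theorem restrict_mul_restrict_eq_smul {R M : Type*} [CommSemiring R] [AddCommMonoid M]
    [Module R M] {ζ : R} {f g : End R M} (h : f * g = ζ • (g * f)) {W : Submodule R M}
    (hfW : ∀ x ∈ W, f x ∈ W) (hgW : ∀ x ∈ W, g x ∈ W) :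
    (f.restrict hfW * g.restrict hgW : End R W) =
      ζ • (g.restrict hgW * f.restrict hfW : End R W) :=
  LinearMap.ext fun x => Subtype.ext (LinearMap.congr_fun h x)

theorem isUnit_restrict_of_injective {R M : Type*} [Ring R] [AddCommGroup M] [Module R M]
    {f : End R M} {W : Submodule R M} [IsArtinian R W] (hf : Function.Injective f)
    (hfW : ∀ x ∈ W, f x ∈ W) : IsUnit (f.restrict hfW : End R W) :=
  (End.isUnit_iff _).2 <| IsArtinian.bijective_of_injective_endomorphism _ <|
    (Set.MapsTo.restrict_inj hfW).2 hf.injOn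

theorem dvd_finrank_of_mul_eq_smul_mul {R M : Type*} [CommRing R] [AddCommGroup M] [Module R M]
    {ζ : R} {n : ℕ} (hζ : IsPrimitiveRoot ζ n) {f g : End R M} (hf : Function.Injective f)
    (hg : Function.Injective g) (h : f * g = ζ • (g * f)) {W : Submodule R M} [Free R W]
    [IsArtinian R W] (hfW : ∀ x ∈ W, f x ∈ W) (hgW : ∀ x ∈ W, g x ∈ W) :
    n ∣ finrank R W :=
  hζ.dvd_of_pow_eq_one _ <| pow_finrank_eq_one_of_mul_eq_smul_mul
    (isUnit_restrict_of_injective hf hfW) (isUnit_restrict_of_injective hg hgW)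
    (restrict_mul_restrict_eq_smul h hfW hgW)

theorem eq_bot_or_eq_top_of_finrank_dvd_finrank {K V : Type*} [DivisionRing K] [AddCommGroup V]
    [Module K V] [FiniteDimensional K V] {W : Submodule K V}
    (h : finrank K V ∣ finrank K W) : W = ⊥ ∨ W = ⊤ := by
  rcases Nat.eq_zero_or_pos (finrank K W) with hzero | hpos
  · exact Or.inl (Submodule.finrank_eq_zero.mp hzero)
  · exact Or.inr (Submodule.eq_top_of_finrank_eq
      (W.finrank_le.antisymm (Nat.le_of_dvd hpos h)))

theorem statement5_general {K V : Type*} [Field K] [AddCommGroup V] [Module K V]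
    [FiniteDimensional K V] {ζ : K} (hζ : IsPrimitiveRoot ζ (finrank K V))
    {f g : LinearMap.GeneralLinearGroup K V} (hcomm : (↑⁅f, g⁆ : End K V) = ζ • (1 : End K V))
    {W : Submodule K V} (hf : ∀ v ∈ W, (f : End K V) v ∈ W)
    (hg : ∀ v ∈ W, (g : End K V) v ∈ W) : W = ⊥ ∨ W = ⊤ := by
  have hf_inj : Function.Injective (f : End K V) := ((End.isUnit_iff _).1 f.isUnit).injective
  have hg_inj : Function.Injective (g : End K V) := ((End.isUnit_iff _).1 g.isUnit).injective
  have hfg := mul_eq_smul_mul_of_commutatorElement_eq_smul_one hcomm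
  exact eq_bot_or_eq_top_of_finrank_dvd_finrank
    (dvd_finrank_of_mul_eq_smul_mul hζ hf_inj hg_inj hfg hf hg)

/-- Let `K` be a field, `n ≥ 1`, `ζ ∈ K` a primitive `n`-th root of unity
and `A, B ∈ GL(n,K)` with `A B A⁻¹ B⁻¹ = ζ·Iₙ`.  Then every linear subspace `W ⊆ Kⁿ`
invariant under `A` and `B` is `0` or all of `Kⁿ`: the subgroup generated by `A` and `B`
acts irreducibly on `Kⁿ`. -/
theorem statement5 (K : Type*) [Field K] (n : ℕ) (hn : 1 ≤ n)
    (ζ : K) (hζ : IsPrimitiveRoot ζ n) (A B : GL (Fin n) K)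
    (hcomm : (↑(A * B * A⁻¹ * B⁻¹) : Matrix (Fin n) (Fin n) K)
      = ζ • (1 : Matrix (Fin n) (Fin n) K))
    (W : Submodule K (Fin n → K))
    (hA : ∀ v ∈ W, Matrix.mulVec (A : Matrix (Fin n) (Fin n) K) v ∈ W)
    (hB : ∀ v ∈ W, Matrix.mulVec (B : Matrix (Fin n) (Fin n) K) v ∈ W) :
    W = ⊥ ∨ W = ⊤ := by
  exact statement5_general (by rwa [finrank_fin_fun])
    (coe_commutatorElement_toLin_eq_smul_one hcomm) hA hB
end
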